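/- Let Γ be a group and N a subgroup of Γ. Let κ₁ and κ₂ be finite-dimensional complex representations of Γ such that the space Hom_N(κ₁, κ₂) of N-equivariant linear maps is one-dimensional and every N-equivariant linear map κ₁ → κ₂ is Γ-equivariant. Let ρ and τ be finite-dimensional complex representations of Γ on whose spaces N acts trivially. Then every Γ-equivariant linear map κ₁ ⊗ ρ → κ₂ ⊗ τ is of the form S ⊗ T with S spanning Hom_N(κ₁, κ₂) and T a Γ-equivariant map ρ → τ, and the natural map gives a linear isomorphism Hom_Γ(κ₁ ⊗ ρ, κ₂ ⊗ τ) ≅ Hom_N(κ₁, κ₂) ⊗ Hom_Γ(ρ, τ); in particular dim Hom_Γ(κ₁ ⊗ ρ, κ₂ ⊗ τ) = dim Hom_Γ(ρ, τ). -/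

import Mathlib

/-!
Statement 9: the tensor-decomposition principle for equivariant homomorphism spaces.
-/

noncomputable section

open scoped TensorProduct

variable {Γ : Type*} [Group Γ]

/-- The space of linear maps between the spaces of two representations of `Γ` which are
equivariant for all elements of a subset `K` of `Γ`. -/
def equivHoms {V W : Type*} [AddCommGroup V] [Module ℂ V] [AddCommGroup W] [Module ℂ W]
    (K : Set Γ) (σ : Representation ℂ Γ V) (σ' : Representation ℂ Γ W) :
    Submodule ℂ (V →ₗ[ℂ] W) where
  carrier := {T | ∀ g ∈ K, ∀ v : V, T (σ g v) = σ' g (T v)}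
  zero_mem' := by intro g hg v; simp
  add_mem' := by intro S T hS hT g hg v; simp [hS g hg v, hT g hg v]
  smul_mem' := by intro c T hT g hg v; simp [hT g hg v]

theorem aux_mem {V W : Type*} [AddCommGroup V] [Module ℂ V] [AddCommGroup W] [Module ℂ W]
    (K : Set Γ) (σ : Representation ℂ Γ V) (σ' : Representation ℂ Γ W) (T : V →ₗ[ℂ] W) :
    T ∈ equivHoms K σ σ' ↔ ∀ g ∈ K, ∀ v : V, T (σ g v) = σ' g (T v) := Iff.rfl

/-- Contraction of the right factor. -/
def ctr {V W : Type*} [AddCommGroup V] [Module ℂ V] [AddCommGroup W] [Module ℂ W]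
    (f : W →ₗ[ℂ] ℂ) : V ⊗[ℂ] W →ₗ[ℂ] V :=
  (TensorProduct.rid ℂ V).toLinearMap ∘ₗ TensorProduct.map LinearMap.id f

/-- Contraction of the left factor. -/
def ctl {V W : Type*} [AddCommGroup V] [Module ℂ V] [AddCommGroup W] [Module ℂ W]
    (f : V →ₗ[ℂ] ℂ) : V ⊗[ℂ] W →ₗ[ℂ] W :=
  (TensorProduct.lid ℂ W).toLinearMap ∘ₗ TensorProduct.map f LinearMap.id

section
variable {V W : Type*} [AddCommGroup V] [Module ℂ V] [AddCommGroup W] [Module ℂ W]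

theorem ctr_tmul (f : W →ₗ[ℂ] ℂ) (v : V) (w : W) : ctr f (v ⊗ₜ[ℂ] w) = f w • v := by
  simp [ctr]

theorem ctl_tmul (f : V →ₗ[ℂ] ℂ) (v : V) (w : W) : ctl f (v ⊗ₜ[ℂ] w) = f v • w := by
  simp [ctl]

theorem ctr_sep [FiniteDimensional ℂ W] (x y : V ⊗[ℂ] W)
    (h : ∀ f : W →ₗ[ℂ] ℂ, ctr f x = ctr f y) : x = y := by
  let b := Module.finBasis ℂ W
  have key : ∀ z : V ⊗[ℂ] W, z = ∑ i, (ctr (b.coord i) z) ⊗ₜ[ℂ] b i := by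
    intro z
    induction z with
    | zero => simp
    | tmul v w =>
      simp only [ctr_tmul, TensorProduct.smul_tmul, ← TensorProduct.tmul_sum]
      congr 1
      exact (b.sum_repr w).symm
    | add a c ha hc =>
      simp only [map_add, TensorProduct.add_tmul, Finset.sum_add_distrib]
      rw [← ha, ← hc]
  rw [key x, key y]
  simp only [h]

theorem ctr_map (f : W →ₗ[ℂ] ℂ) (A : V →ₗ[ℂ] V) (x : V ⊗[ℂ] W) :
    ctr f (TensorProduct.map A (1 : W →ₗ[ℂ] W) x) = A (ctr f x) := by
  induction x with
  | zero => simp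
  | tmul v w => simp [ctr_tmul]
  | add a c ha hc => simp only [map_add, ha, hc]

theorem ctr_ctl (f : W →ₗ[ℂ] ℂ) (g : V →ₗ[ℂ] ℂ) (x : V ⊗[ℂ] W) :
    f (ctl g x) = g (ctr f x) := by
  induction x with
  | zero => simp
  | tmul v w => simp [ctr_tmul, ctl_tmul, mul_comm]
  | add a c ha hc => simp only [map_add, ha, hc]
end

theorem statement9
    {V₁ V₂ Vρ Vτ : Type*}
    [AddCommGroup V₁] [Module ℂ V₁] [FiniteDimensional ℂ V₁]
    [AddCommGroup V₂] [Module ℂ V₂] [FiniteDimensional ℂ V₂]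
    [AddCommGroup Vρ] [Module ℂ Vρ] [FiniteDimensional ℂ Vρ]
    [AddCommGroup Vτ] [Module ℂ Vτ] [FiniteDimensional ℂ Vτ]
    (N : Subgroup Γ)
    (κ₁ : Representation ℂ Γ V₁) (κ₂ : Representation ℂ Γ V₂)
    (ρ : Representation ℂ Γ Vρ) (τ : Representation ℂ Γ Vτ)
    -- `Hom_N(κ₁, κ₂)` is one-dimensional
    (hdim : Module.finrank ℂ (equivHoms (N : Set Γ) κ₁ κ₂) = 1)
    -- every `N`-equivariant linear map `κ₁ → κ₂` is `Γ`-equivariant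
    (hNΓ : ∀ T : V₁ →ₗ[ℂ] V₂, T ∈ equivHoms (N : Set Γ) κ₁ κ₂ →
        T ∈ equivHoms (Set.univ : Set Γ) κ₁ κ₂)
    -- `N` acts trivially on the spaces of `ρ` and `τ`
    (hρtriv : ∀ g ∈ N, ρ g = 1) (hτtriv : ∀ g ∈ N, τ g = 1) :
    -- every `Γ`-equivariant map `κ₁ ⊗ ρ → κ₂ ⊗ τ` has the form `S ⊗ T`
    (∀ Φ : (V₁ ⊗[ℂ] Vρ) →ₗ[ℂ] (V₂ ⊗[ℂ] Vτ),
        Φ ∈ equivHoms (Set.univ : Set Γ) (κ₁.tprod ρ) (κ₂.tprod τ) →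
        ∃ (S : V₁ →ₗ[ℂ] V₂) (T : Vρ →ₗ[ℂ] Vτ),
          Submodule.span ℂ {S} = equivHoms (N : Set Γ) κ₁ κ₂ ∧
          T ∈ equivHoms (Set.univ : Set Γ) ρ τ ∧ Φ = TensorProduct.map S T) ∧
    -- the natural map is a linear isomorphism
    (∃ φ : ((equivHoms (N : Set Γ) κ₁ κ₂) ⊗[ℂ] (equivHoms (Set.univ : Set Γ) ρ τ)) ≃ₗ[ℂ]
        (equivHoms (Set.univ : Set Γ) (κ₁.tprod ρ) (κ₂.tprod τ)),
      ∀ (S : equivHoms (N : Set Γ) κ₁ κ₂) (T : equivHoms (Set.univ : Set Γ) ρ τ),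
        (φ (S ⊗ₜ[ℂ] T) : (V₁ ⊗[ℂ] Vρ) →ₗ[ℂ] (V₂ ⊗[ℂ] Vτ)) =
          TensorProduct.map (S : V₁ →ₗ[ℂ] V₂) (T : Vρ →ₗ[ℂ] Vτ)) ∧
    -- in particular the dimensions agree
    Module.finrank ℂ (equivHoms (Set.univ : Set Γ) (κ₁.tprod ρ) (κ₂.tprod τ)) =
      Module.finrank ℂ (equivHoms (Set.univ : Set Γ) ρ τ) := by
  have hL : Module.finrank ℂ (equivHoms (N : Set Γ) κ₁ κ₂) = Module.finrank ℂ ℂ := by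
    rw [hdim, Module.finrank_self]
  let L : (equivHoms (N : Set Γ) κ₁ κ₂) ≃ₗ[ℂ] ℂ := LinearEquiv.ofFinrankEq _ _ hL
  obtain ⟨S₀, hS₀⟩ : ∃ S, S = L.symm 1 := ⟨_, rfl⟩
  have hS : ∀ S, S = L S • S₀ := by
    intro S
    apply L.injective
    simp [hS₀]
  have hne : (S₀ : V₁ →ₗ[ℂ] V₂) ≠ 0 := by
    intro h
    have h2 : S₀ = 0 := Subtype.ext h
    rw [hS₀] at h2
    simp at h2
  obtain ⟨v₀, hv₀⟩ : ∃ v, S₀.1 v ≠ 0 := by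
    by_contra! h
    exact hne (LinearMap.ext h)
  obtain ⟨l, hl⟩ : ∃ l : V₂ →ₗ[ℂ] ℂ, l (S₀.1 v₀) = 1 :=
    Module.Projective.exists_dual_eq_one ℂ hv₀
  have hS₀Γ := hNΓ S₀.1 S₀.2
  have hinj : ∀ T : Vρ →ₗ[ℂ] Vτ, ∀ w, ctl l (TensorProduct.map S₀.1 T (v₀ ⊗ₜ[ℂ] w)) = T w := by
    intro T w
    simp [ctl_tmul, hl]
  have hspan : Submodule.span ℂ {S₀.1} = equivHoms (N : Set Γ) κ₁ κ₂ := by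
    apply le_antisymm
    · rw [Submodule.span_singleton_le_iff_mem]
      exact S₀.2
    · intro S hSm
      rw [Submodule.mem_span_singleton]
      exact ⟨L ⟨S, hSm⟩, (congrArg Subtype.val (hS ⟨S, hSm⟩)).symm⟩
  have hmem : ∀ T ∈ equivHoms (Set.univ : Set Γ) ρ τ, TensorProduct.map S₀.1 T ∈
      equivHoms (Set.univ : Set Γ) (κ₁.tprod ρ) (κ₂.tprod τ) := by
    intro T hT g hg x
    induction x with
    | zero => simp
    | tmul v w =>
      simp only [Representation.tprod_apply, TensorProduct.map_tmul]
      rw [hS₀Γ g hg, hT g hg]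
    | add a c ha hc => simp only [map_add, ha, hc]
  have main : ∀ Φ ∈ equivHoms (Set.univ : Set Γ) (κ₁.tprod ρ) (κ₂.tprod τ),
      ∃ T ∈ equivHoms (Set.univ : Set Γ) ρ τ, Φ = TensorProduct.map S₀.1 T := by
    intro Φ hΦ
    let T : Vρ →ₗ[ℂ] Vτ := ctl l ∘ₗ Φ ∘ₗ TensorProduct.mk ℂ V₁ Vρ v₀
    have hT : ∀ w, T w = ctl l (Φ (v₀ ⊗ₜ[ℂ] w)) := fun w => rfl
    have hΦT : Φ = TensorProduct.map S₀.1 T := by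
      apply TensorProduct.ext'
      intro v w
      apply ctr_sep
      intro f
      let R : V₁ →ₗ[ℂ] V₂ := ctr f ∘ₗ Φ ∘ₗ (TensorProduct.mk ℂ V₁ Vρ).flip w
      have hR : ∀ v, R v = ctr f (Φ (v ⊗ₜ[ℂ] w)) := fun v => rfl
      have hRm : R ∈ equivHoms (N : Set Γ) κ₁ κ₂ := by
        intro g hg v
        have h1 := hΦ g (Set.mem_univ g) (v ⊗ₜ[ℂ] w)
        simp only [Representation.tprod_apply, TensorProduct.map_tmul] at h1
        rw [hρtriv g hg, hτtriv g hg, Module.End.one_apply] at h1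
        rw [hR, hR, h1, ctr_map]
      obtain ⟨c, hc⟩ : ∃ c : ℂ, R = c • S₀.1 :=
        ⟨L ⟨R, hRm⟩, congrArg Subtype.val (hS ⟨R, hRm⟩)⟩
      have hfc : f (T w) = c := by
        rw [hT, ctr_ctl, ← hR, hc]
        simp [hl]
      rw [← hR, hc, TensorProduct.map_tmul, ctr_tmul, hfc]
      rfl
    refine ⟨T, ?_, hΦT⟩
    intro g hg w
    have h1 := hΦ g hg ((κ₁ g⁻¹ v₀) ⊗ₜ[ℂ] w)
    rw [hΦT] at h1
    simp only [Representation.tprod_apply, TensorProduct.map_tmul] at h1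
    rw [← hS₀Γ g hg, Representation.self_inv_apply] at h1
    have h2 := congrArg (ctl l) h1
    simpa [ctl_tmul, hl] using h2
  let e₀ : (equivHoms (Set.univ : Set Γ) ρ τ) →ₗ[ℂ]
      (equivHoms (Set.univ : Set Γ) (κ₁.tprod ρ) (κ₂.tprod τ)) :=
    LinearMap.codRestrict _
      ((TensorProduct.mapBilinear (RingHom.id ℂ) V₁ Vρ V₂ Vτ S₀.1) ∘ₗ Submodule.subtype _)
      (fun T => hmem T.1 T.2)
  have he₀ : ∀ T, (e₀ T).1 = TensorProduct.map S₀.1 T.1 := fun T => rfl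
  have hbij : Function.Bijective e₀ := by
    constructor
    · intro T T' h
      apply Subtype.ext
      apply LinearMap.ext
      intro w
      rw [← hinj T.1 w, ← hinj T'.1 w, ← he₀, ← he₀, h]
    · intro Φ
      obtain ⟨T, hT, h⟩ := main Φ.1 Φ.2
      exact ⟨⟨T, hT⟩, Subtype.ext h.symm⟩
  let e := LinearEquiv.ofBijective e₀ hbij
  refine ⟨?_, ⟨(TensorProduct.congr L (LinearEquiv.refl ℂ _)).trans
    ((TensorProduct.lid ℂ _).trans e), ?_⟩, e.finrank_eq.symm⟩
  · intro Φ hΦ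
    obtain ⟨T, hT, h⟩ := main Φ hΦ
    exact ⟨S₀.1, T, hspan, hT, h⟩
  · intro S T
    have h1 : (TensorProduct.congr L (LinearEquiv.refl ℂ _)).trans
        ((TensorProduct.lid ℂ _).trans e) (S ⊗ₜ[ℂ] T) = e₀ (L S • T) := by
      simp [e]
    rw [h1, he₀]
    have h2 : S.1 = L S • S₀.1 := congrArg Subtype.val (hS S)
    rw [h2, TensorProduct.map_smul_left, Submodule.coe_smul, TensorProduct.map_smul_right]
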